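/- Let 2 ≤ k < n, let H₀ ∈ Σ_k, and let U be a unitary with U⁻¹H₀U = Λ₀ = diag(λ_1(H₀),…,λ_n(H₀)). Let D ≠ 0 be a real diagonal matrix with tr(D) = 0, D_{jj} = 0 for j > k, and D_{11} ≤ D_{22} ≤ … ≤ D_{kk}. Define H(t) = U(Λ₀ + tD)U⁻¹. Then for all sufficiently small t ≠ 0, λ_k(H(t)) < λ_{k+1}(H(t)) and (H(t))_Σ = H₀; in particular, H₀ is the unique closest point of Σ_k to H(t) in Frobenius distance. -/

import Mathlib

open Matrix

noncomputable section

/-- Sorted eigenvalues (increasing, counted with multiplicity) of a Hermitian matrix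
(junk value for non-Hermitian matrices). -/
def eigs {n : ℕ} (H : Matrix (Fin n) (Fin n) ℂ) : Fin n → ℝ :=
  if hH : H.IsHermitian then hH.eigenvalues ∘ Tuple.sort hH.eigenvalues else fun _ => 0

/-- Frobenius norm of a complex matrix. -/
def frobNorm {n : ℕ} (M : Matrix (Fin n) (Fin n) ℂ) : ℝ :=
  Real.sqrt (∑ a, ∑ b, ‖M a b‖ ^ 2)

/-- Mean of the lowest k eigenvalues. -/
def lamBar {n : ℕ} (k : ℕ) (H : Matrix (Fin n) (Fin n) ℂ) : ℝ :=
  (∑ j : Fin n, if (j : ℕ) < k then eigs H j else 0) / k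

/-- `Λ_Σ`: the diagonal of sorted eigenvalues, with the lowest k entries replaced
by their mean. -/
def LambdaSigma {n : ℕ} (k : ℕ) (H : Matrix (Fin n) (Fin n) ℂ) : Matrix (Fin n) (Fin n) ℂ :=
  Matrix.diagonal fun i => if (i : ℕ) < k then (lamBar k H : ℂ) else (eigs H i : ℂ)

/-- The set Σ_k of k-fold ground-state degenerate Hermitian matrices:
λ₁ = … = λ_k < λ_{k+1}. -/
def SigmaSet (n k : ℕ) : Set (Matrix (Fin n) (Fin n) ℂ) :=
  {H | H.IsHermitian ∧ (∀ i j : Fin n, (i : ℕ) < k → (j : ℕ) < k → eigs H i = eigs H j) ∧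
    ∀ i j : Fin n, (i : ℕ) < k → (j : ℕ) = k → eigs H i < eigs H j}

lemma eigs_mono_aux {n : ℕ} (H : Matrix (Fin n) (Fin n) ℂ) : Monotone (eigs H) := by
  unfold eigs
  split_ifs with h
  · exact Tuple.monotone_sort _
  · exact monotone_const

lemma unit_inv_aux {n : ℕ} {U : Matrix (Fin n) (Fin n) ℂ}
    (hU : U ∈ Matrix.unitaryGroup (Fin n) ℂ) : U⁻¹ = star U :=
  Matrix.inv_eq_left_inv (Matrix.mem_unitaryGroup_iff'.1 hU)

lemma exists_diag_aux {n : ℕ} {H : Matrix (Fin n) (Fin n) ℂ} (hH : H.IsHermitian) :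
    ∃ V ∈ Matrix.unitaryGroup (Fin n) ℂ,
      H = V * Matrix.diagonal (fun i => (eigs H i : ℂ)) * star V := by
  set σ := Tuple.sort hH.eigenvalues with hσ
  set E : Matrix (Fin n) (Fin n) ℂ := hH.eigenvectorUnitary.1 with hE
  have hEm : E ∈ Matrix.unitaryGroup (Fin n) ℂ := hH.eigenvectorUnitary.2
  have he : eigs H = fun i => hH.eigenvalues (σ i) := by
    unfold eigs
    rw [dif_pos hH]
    rfl
  have hsp : H = E * Matrix.diagonal (fun i => (hH.eigenvalues i : ℂ)) * star E := by
    have := hH.spectral_theorem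
    rw [Unitary.conjStarAlgAut_apply] at this
    exact this
  refine ⟨E.submatrix id σ, ?_, ?_⟩
  · rw [Matrix.mem_unitaryGroup_iff] at hEm ⊢
    rw [Matrix.star_eq_conjTranspose, Matrix.conjTranspose_submatrix,
      Matrix.submatrix_mul_equiv, ← Matrix.star_eq_conjTranspose, hEm]
    simp
  · have h1 : Matrix.diagonal (fun i => (eigs H i : ℂ)) =
        (Matrix.diagonal (fun i => (hH.eigenvalues i : ℂ))).submatrix σ σ := by
      rw [Matrix.submatrix_diagonal_equiv, he]
      rfl
    rw [h1, Matrix.star_eq_conjTranspose, Matrix.conjTranspose_submatrix,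
      Matrix.submatrix_mul_equiv, Matrix.submatrix_mul_equiv, ← Matrix.star_eq_conjTranspose,
      ← hsp]
    simp

lemma row_aux {n : ℕ} {W : Matrix (Fin n) (Fin n) ℂ}
    (hW : W ∈ Matrix.unitaryGroup (Fin n) ℂ) (i : Fin n) : ∑ j, ‖W i j‖ ^ 2 = 1 := by
  have h := congrFun (congrFun (Matrix.mem_unitaryGroup_iff.1 hW) i) i
  rw [Matrix.mul_apply, Matrix.one_apply_eq] at h
  have : ((∑ j, ‖W i j‖ ^ 2 : ℝ) : ℂ) = 1 := by
    rw [← h]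
    push_cast
    refine Finset.sum_congr rfl fun j _ => ?_
    rw [Matrix.star_apply, Complex.star_def, Complex.mul_conj']
  exact_mod_cast this

lemma col_aux {n : ℕ} {W : Matrix (Fin n) (Fin n) ℂ}
    (hW : W ∈ Matrix.unitaryGroup (Fin n) ℂ) (j : Fin n) : ∑ i, ‖W i j‖ ^ 2 = 1 := by
  have h := row_aux (Unitary.star_mem hW) j
  simpa [Matrix.star_apply] using h

def fsq {n : ℕ} (M : Matrix (Fin n) (Fin n) ℂ) : ℝ := ∑ a, ∑ b, ‖M a b‖ ^ 2

lemma fsq_trace {n : ℕ} (M : Matrix (Fin n) (Fin n) ℂ) :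
    ((fsq M : ℝ) : ℂ) = (M * star M).trace := by
  unfold fsq Matrix.trace
  push_cast
  refine Finset.sum_congr rfl fun i _ => ?_
  rw [Matrix.diag_apply, Matrix.mul_apply]
  refine Finset.sum_congr rfl fun j _ => ?_
  rw [Matrix.star_apply, Complex.star_def, Complex.mul_conj']

lemma fsq_conj {n : ℕ} (M U V : Matrix (Fin n) (Fin n) ℂ)
    (hU : U ∈ Matrix.unitaryGroup (Fin n) ℂ) (hV : V ∈ Matrix.unitaryGroup (Fin n) ℂ) :
    fsq (U * M * star V) = fsq M := by
  have h : ((fsq (U * M * star V) : ℝ) : ℂ) = ((fsq M : ℝ) : ℂ) := by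
    rw [fsq_trace, fsq_trace]
    have h1 : U * M * star V * star (U * M * star V) = U * (M * star M * star U) := by
      rw [star_mul, star_mul, star_star]
      calc _ = U * M * (star V * V) * (star M * star U) := by simp only [Matrix.mul_assoc]
        _ = _ := by
          rw [Matrix.mem_unitaryGroup_iff'.1 hV]; simp only [Matrix.mul_assoc, Matrix.mul_one]
    rw [h1, Matrix.trace_mul_comm, Matrix.mul_assoc, Matrix.mem_unitaryGroup_iff'.1 hU,
      Matrix.mul_one]
  exact_mod_cast h

/-- distance between two diagonalized matrices -/
lemma fsq_diff {n : ℕ} (U V : Matrix (Fin n) (Fin n) ℂ)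
    (hU : U ∈ Matrix.unitaryGroup (Fin n) ℂ) (hV : V ∈ Matrix.unitaryGroup (Fin n) ℂ)
    (μ g : Fin n → ℝ) :
    fsq (U * Matrix.diagonal (fun i => (μ i : ℂ)) * star U
      - V * Matrix.diagonal (fun i => (g i : ℂ)) * star V)
      = ∑ i, ∑ j, ‖(star U * V) i j‖ ^ 2 * (μ i - g j) ^ 2 := by
  have h1 : U * Matrix.diagonal (fun i => (μ i : ℂ)) * star U
      - V * Matrix.diagonal (fun i => (g i : ℂ)) * star V
      = U * (Matrix.diagonal (fun i => (μ i : ℂ)) * (star U * V)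
        - (star U * V) * Matrix.diagonal (fun i => (g i : ℂ))) * star V := by
    rw [Matrix.mul_sub, Matrix.sub_mul]
    congr 1
    · calc _ = U * Matrix.diagonal (fun i => (μ i : ℂ)) * star U * (V * star V) := by
            rw [Matrix.mem_unitaryGroup_iff.1 hV, Matrix.mul_one]
        _ = _ := by simp only [Matrix.mul_assoc]
    · calc _ = (U * star U) * V * Matrix.diagonal (fun i => (g i : ℂ)) * star V := by
            rw [Matrix.mem_unitaryGroup_iff.1 hU, Matrix.one_mul]
        _ = _ := by simp only [Matrix.mul_assoc]
  rw [h1, fsq_conj _ _ _ hU hV]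
  unfold fsq
  refine Finset.sum_congr rfl fun i _ => Finset.sum_congr rfl fun j _ => ?_
  rw [Matrix.sub_apply, Matrix.diagonal_mul, Matrix.mul_diagonal]
  have : (μ i : ℂ) * (star U * V) i j - (star U * V) i j * (g j : ℂ)
      = (star U * V) i j * ((μ i - g j : ℝ) : ℂ) := by push_cast; ring
  rw [this, norm_mul, mul_pow, Complex.norm_real, Real.norm_eq_abs, sq_abs]

/-- elementary inequality behind the strict minimality -/
lemma bound_aux (a c δ M : ℝ) (hM : 0 ≤ M) (hMδ : M < δ) :
    ∃ F K : ℝ, 0 < F + K ∧ (∀ x, a ≤ x → F ≤ (c - x) ^ 2 - 2 * M * (x - a)) ∧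
      ∀ y, c + δ ≤ y → K ≤ (y - a) ^ 2 := by
  rcases le_or_gt a c with h | h
  · refine ⟨-M ^ 2 - 2 * M * (c - a), (δ + (c - a)) ^ 2, ?_, ?_, ?_⟩
    · nlinarith [mul_nonneg (sub_nonneg.2 h) (sub_nonneg.2 hMδ.le), sq_nonneg (c - a)]
    · intro x hx
      nlinarith [sq_nonneg (x - c - M)]
    · intro y hy
      apply pow_le_pow_left₀ <;> linarith
  · rcases le_or_gt M (a - c) with h2 | h2
    · refine ⟨(a - c) ^ 2, 0, ?_, ?_, ?_⟩
      · have : 0 < a - c := by linarith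
        positivity
      · intro x hx
        nlinarith [mul_nonneg (sub_nonneg.2 hx) (sub_nonneg.2 h2), sq_nonneg (x - a)]
      · intro y _
        positivity
    · refine ⟨-M ^ 2 + 2 * M * (a - c), (δ - (a - c)) ^ 2, ?_, ?_, ?_⟩
      · nlinarith [sq_nonneg (a - c), mul_pos (sub_pos.2 hMδ) (sub_pos.2 h2),
          mul_pos (sub_pos.2 hMδ) (sub_pos.2 hMδ), mul_pos (sub_pos.2 h) (sub_pos.2 h)]
      · intro x hx
        nlinarith [sq_nonneg (x - c - M)]
      · intro y hy
        apply pow_le_pow_left₀ <;> linarith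

/-- If `P` is doubly stochastic and links equal values, symmetric sums agree. -/
lemma sum_fn_aux {n : ℕ} (P : Fin n → Fin n → ℝ) (hr : ∀ i, ∑ j, P i j = 1)
    (hc : ∀ j, ∑ i, P i j = 1) (μ e : Fin n → ℝ) (h : ∀ i j, P i j = 0 ∨ μ i = e j)
    (φ : ℝ → ℝ) : ∑ j, φ (e j) = ∑ i, φ (μ i) := by
  calc ∑ j, φ (e j) = ∑ j, ∑ i, P i j * φ (e j) := by
        refine Finset.sum_congr rfl fun j _ => ?_
        rw [← Finset.sum_mul, hc, one_mul]
    _ = ∑ i, ∑ j, P i j * φ (e j) := Finset.sum_comm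
    _ = ∑ i, ∑ j, P i j * φ (μ i) := by
        refine Finset.sum_congr rfl fun i _ => Finset.sum_congr rfl fun j _ => ?_
        rcases h i j with h | h <;> simp [h]
    _ = _ := by
        refine Finset.sum_congr rfl fun i _ => ?_
        rw [← Finset.sum_mul, hr, one_mul]

lemma mass_aux {n : ℕ} (P : Fin n → Fin n → ℝ) (hr : ∀ i, ∑ j, P i j = 1)
    (hc : ∀ j, ∑ i, P i j = 1) (k : ℕ) :
    ∑ i : Fin n, ∑ j : Fin n, (if (i : ℕ) < k ∧ ¬ (j : ℕ) < k then P i j else 0)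
    = ∑ i : Fin n, ∑ j : Fin n, (if ¬ (i : ℕ) < k ∧ (j : ℕ) < k then P i j else 0) := by
  have h1 : ∑ i : Fin n, ∑ j : Fin n, (if (i : ℕ) < k then P i j else 0)
      = ∑ i : Fin n, ∑ j : Fin n, (if (j : ℕ) < k then P i j else 0) := by
    rw [Finset.sum_comm (f := fun i j : Fin n => if (j : ℕ) < k then P i j else 0)]
    refine Finset.sum_congr rfl fun i _ => ?_
    by_cases h : (i : ℕ) < k <;> simp [h, hr, hc]
  rw [← sub_eq_zero] at h1 ⊢
  refine Eq.trans ?_ h1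
  simp only [← Finset.sum_sub_distrib]
  refine Finset.sum_congr rfl fun i _ => Finset.sum_congr rfl fun j _ => ?_
  by_cases h : (i : ℕ) < k <;> by_cases h' : (j : ℕ) < k <;> simp [h, h']

/-- A monotone tuple having exactly `k` entries below a threshold. -/
lemma threshold_aux {n k : ℕ} (hkn : k ≤ n) (e : Fin n → ℝ) (he : Monotone e) (θ : ℝ)
    (hcard : (Finset.univ.filter fun i => e i < θ).card = k) (i : Fin n) :
    e i < θ ↔ (i : ℕ) < k := by
  constructor
  · intro h
    by_contra hc
    have hsub : Finset.Iic i ⊆ Finset.univ.filter fun i => e i < θ := by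
      intro j hj
      simp only [Finset.mem_Iic] at hj
      simp only [Finset.mem_filter, Finset.mem_univ, true_and]
      exact (he hj).trans_lt h
    have := Finset.card_le_card hsub
    rw [hcard, Fin.card_Iic] at this
    omega
  · intro h
    by_contra hc
    have hsub : (Finset.univ.filter fun i => e i < θ) ⊆ Finset.Iio i := by
      intro j hj
      simp only [Finset.mem_filter, Finset.mem_univ, true_and] at hj
      rw [Finset.mem_Iio]
      by_contra hij
      exact hc ((he (not_lt.1 hij)).trans_lt hj)
    have := Finset.card_le_card hsub
    rw [hcard, Fin.card_Iio] at this
    omega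

/-- The strict positivity at the heart of the minimality. -/
lemma key_aux {n k : ℕ} (P : Fin n → Fin n → ℝ) (hP : ∀ i j, 0 ≤ P i j)
    (hr : ∀ i, ∑ j, P i j = 1) (hc : ∀ j, ∑ i, P i j = 1)
    (l g d : Fin n → ℝ) (a c δ M : ℝ) (hM : 0 ≤ M) (hMδ : M < δ)
    (hl1 : ∀ i : Fin n, (i : ℕ) < k → l i = c) (hl2 : ∀ i : Fin n, ¬ (i : ℕ) < k → c + δ ≤ l i)
    (hg1 : ∀ i : Fin n, (i : ℕ) < k → g i = a) (hg2 : ∀ i : Fin n, ¬ (i : ℕ) < k → a ≤ g i)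
    (hd1 : ∀ i, |d i| ≤ M) (hd2 : ∀ i : Fin n, ¬ (i : ℕ) < k → d i = 0)
    (hds : ∑ i, d i = 0)
    (hpos : 0 < ∑ i, ∑ j, P i j * (l i - g j) ^ 2) :
    ∑ i, d i ^ 2 < ∑ i, ∑ j, P i j * (l i + d i - g j) ^ 2 := by
  have hdl : ∀ i, d i * (l i - a) = d i * (c - a) := by
    intro i
    by_cases h : (i : ℕ) < k
    · rw [hl1 i h]
    · rw [hd2 i h]; ring
  have hexp : ∑ i, ∑ j, P i j * (l i + d i - g j) ^ 2 - ∑ i, d i ^ 2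
      = ∑ i, ∑ j, P i j * ((l i - g j) ^ 2 - 2 * d i * (g j - a)) := by
    have h0 : ∑ i, ∑ j, P i j * (d i ^ 2 + 2 * d i * (l i - a)) = ∑ i, d i ^ 2 := by
      calc _ = ∑ i, (d i ^ 2 + 2 * (c - a) * d i) := by
            refine Finset.sum_congr rfl fun i _ => ?_
            rw [← Finset.sum_mul, hr, one_mul, mul_assoc, hdl]; ring
        _ = _ := by rw [Finset.sum_add_distrib, ← Finset.mul_sum, hds]; ring
    rw [← h0]
    simp only [← Finset.sum_sub_distrib]
    refine Finset.sum_congr rfl fun i _ => Finset.sum_congr rfl fun j _ => ?_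
    ring
  rw [← sub_pos, hexp]
  set m := ∑ i : Fin n, ∑ j : Fin n, (if (i : ℕ) < k ∧ ¬ (j : ℕ) < k then P i j else 0) with hm
  have hterm : ∀ i j : Fin n, 0 ≤ (if (i : ℕ) < k ∧ ¬ (j : ℕ) < k then P i j else 0) := by
    intro i j
    split_ifs
    · exact hP i j
    · exact le_rfl
  have hm0 : 0 ≤ m := Finset.sum_nonneg fun i _ => Finset.sum_nonneg fun j _ => hterm i j
  rcases hm0.eq_or_lt with h0 | h0
  · have hz : ∀ i j : Fin n, (i : ℕ) < k → ¬ (j : ℕ) < k → P i j = 0 := by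
      intro i j hi hj
      have h1 := (Finset.sum_eq_zero_iff_of_nonneg
        (fun i _ => Finset.sum_nonneg fun j _ => hterm i j)).1 (hm.symm.trans h0.symm) i
        (Finset.mem_univ _)
      have h2 := (Finset.sum_eq_zero_iff_of_nonneg (fun j _ => hterm i j)).1 h1 j
        (Finset.mem_univ _)
      simpa [hi, hj] using h2
    convert hpos using 1
    refine Finset.sum_congr rfl fun i _ => Finset.sum_congr rfl fun j _ => ?_
    by_cases hi : (i : ℕ) < k
    · by_cases hj : (j : ℕ) < k
      · rw [hg1 j hj]; ring
      · rw [hz i j hi hj]; ring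
    · rw [hd2 i hi]; ring
  · obtain ⟨F, K, hFK, hF, hK⟩ := bound_aux a c δ M hM hMδ
    have hmass := mass_aux P hr hc k
    have : m * (F + K) = ∑ i : Fin n, ∑ j : Fin n,
        ((if (i : ℕ) < k ∧ ¬ (j : ℕ) < k then P i j else 0) * F
        + (if ¬ (i : ℕ) < k ∧ (j : ℕ) < k then P i j else 0) * K) := by
      simp only [Finset.sum_add_distrib, ← Finset.sum_mul]
      rw [← hmass]; ring
    refine (mul_pos h0 hFK).trans_le ?_
    rw [this]
    refine Finset.sum_le_sum fun i _ => Finset.sum_le_sum fun j _ => ?_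
    have hPij := hP i j
    by_cases hi : (i : ℕ) < k
    · by_cases hj : (j : ℕ) < k
      · simp only [hi, hj, hg1 j hj]
        simp only [not_true_eq_false, and_false, false_and, if_false, sub_self, mul_zero, sub_zero,
          zero_mul, add_zero]
        positivity
      · simp only [hi, hj, hl1 i hi]
        simp only [not_false_eq_true, not_true_eq_false, and_self, if_true, if_false, zero_mul,
          add_zero]
        refine mul_le_mul_of_nonneg_left ((hF _ (hg2 j hj)).trans ?_) hPij
        have := (abs_le.1 (hd1 i)).2
        nlinarith [mul_le_mul_of_nonneg_right this (sub_nonneg.2 (hg2 j hj))]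
    · by_cases hj : (j : ℕ) < k
      · simp only [hi, hj, hg1 j hj]
        simp only [not_false_eq_true, not_true_eq_false, and_self, if_true, if_false, zero_mul,
          zero_add, sub_self, mul_zero, sub_zero]
        exact mul_le_mul_of_nonneg_left (hK _ (hl2 i hi)) hPij
      · simp only [hi, hj, hd2 i hi]
        simp only [not_false_eq_true, false_and, and_false, if_false, zero_mul,
          mul_zero, sub_zero, add_zero]
        positivity

/-- Intertwining: conjugate diagonalizations. -/
lemma intertwine_aux {n : ℕ} {U V : Matrix (Fin n) (Fin n) ℂ}
    (hU : U ∈ Matrix.unitaryGroup (Fin n) ℂ) (hV : V ∈ Matrix.unitaryGroup (Fin n) ℂ)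
    (μ e : Fin n → ℝ)
    (h : U * Matrix.diagonal (fun i => (μ i : ℂ)) * star U
      = V * Matrix.diagonal (fun i => (e i : ℂ)) * star V) (i j : Fin n) :
    ‖(star U * V) i j‖ ^ 2 = 0 ∨ μ i = e j := by
  have h1 := fsq_diff U V hU hV μ e
  rw [h, sub_self] at h1
  have h2 : fsq (0 : Matrix (Fin n) (Fin n) ℂ) = 0 := by simp [fsq]
  rw [h2] at h1
  have h3 := (Finset.sum_eq_zero_iff_of_nonneg
    (fun i _ => Finset.sum_nonneg fun j _ => by positivity)).1 h1.symm i (Finset.mem_univ _)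
  have h4 := (Finset.sum_eq_zero_iff_of_nonneg
    (fun j _ => by positivity)).1 h3 j (Finset.mem_univ _)
  rcases mul_eq_zero.1 h4 with h5 | h5
  · exact Or.inl h5
  · exact Or.inr (sub_eq_zero.1 (pow_eq_zero_iff two_ne_zero |>.1 h5))

lemma fsq_eq_zero {n : ℕ} {M : Matrix (Fin n) (Fin n) ℂ} (h : fsq M = 0) : M = 0 := by
  ext i j
  have h3 := (Finset.sum_eq_zero_iff_of_nonneg
    (fun i _ => Finset.sum_nonneg fun j _ => by positivity)).1 h i (Finset.mem_univ _)
  have h4 := (Finset.sum_eq_zero_iff_of_nonneg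
    (fun j _ => by positivity)).1 h3 j (Finset.mem_univ _)
  simpa using h4

lemma fsq_nonneg {n : ℕ} (M : Matrix (Fin n) (Fin n) ℂ) : 0 ≤ fsq M :=
  Finset.sum_nonneg fun i _ => Finset.sum_nonneg fun j _ => by positivity

/-- Transport equality of diagonalizations along matching values. -/
lemma transport_aux {n : ℕ} {U V : Matrix (Fin n) (Fin n) ℂ}
    (hU : U ∈ Matrix.unitaryGroup (Fin n) ℂ) (hV : V ∈ Matrix.unitaryGroup (Fin n) ℂ)
    (μ e : Fin n → ℝ)
    (h : ∀ i j, ‖(star U * V) i j‖ ^ 2 = 0 ∨ μ i = e j) :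
    U * Matrix.diagonal (fun i => (μ i : ℂ)) * star U
      = V * Matrix.diagonal (fun i => (e i : ℂ)) * star V := by
  rw [← sub_eq_zero]
  apply fsq_eq_zero
  rw [fsq_diff U V hU hV]
  refine Finset.sum_eq_zero fun i _ => Finset.sum_eq_zero fun j _ => ?_
  rcases h i j with h | h
  · rw [h, zero_mul]
  · rw [h, sub_self]; ring

lemma conj_aux {n : ℕ} {V H Λ : Matrix (Fin n) (Fin n) ℂ}
    (hV : V ∈ Matrix.unitaryGroup (Fin n) ℂ) (h : V⁻¹ * H * V = Λ) : H = V * Λ * star V := by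
  rw [← h, unit_inv_aux hV]
  calc H = (V * star V) * H * (V * star V) := by
        rw [Matrix.mem_unitaryGroup_iff.1 hV, Matrix.one_mul, Matrix.mul_one]
    _ = _ := by simp only [Matrix.mul_assoc]

/-- **Lines orthogonal to `Σ_k` obtained by spreading the degenerate eigenvalues linearly
project back to the base point:** for `H₀ ∈ Σ_k`, a diagonalizing unitary `U`, and a nonzero
traceless real diagonal `D` supported on the first `k` entries with increasing diagonal there,
the family `H(t) = U(Λ₀ + tD)U⁻¹` satisfies, for all small `t ≠ 0`:
`λ_k(H(t)) < λ_{k+1}(H(t))`, `(H(t))_Σ = H₀`, and `H₀` is the unique closest point of `Σ_k`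
to `H(t)` in Frobenius distance. -/
theorem spread_eigenvalues_projects_to_base {n k : ℕ} (hk2 : 2 ≤ k) (hkn : k < n)
    (H₀ : Matrix (Fin n) (Fin n) ℂ) (h₀ : H₀ ∈ SigmaSet n k)
    (U : Matrix (Fin n) (Fin n) ℂ) (hU : U ∈ Matrix.unitaryGroup (Fin n) ℂ)
    (hdiag : U⁻¹ * H₀ * U = Matrix.diagonal fun i => (eigs H₀ i : ℂ))
    (D : Fin n → ℝ) (hD0 : D ≠ 0) (htr : ∑ i : Fin n, D i = 0)
    (hsupp : ∀ j : Fin n, k ≤ (j : ℕ) → D j = 0)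
    (hmonoD : ∀ i j : Fin n, i ≤ j → (j : ℕ) < k → D i ≤ D j)
    (Hfam : ℝ → Matrix (Fin n) (Fin n) ℂ)
    (hHfam : ∀ t : ℝ, Hfam t
      = U * Matrix.diagonal (fun i => ((eigs H₀ i + t * D i : ℝ) : ℂ)) * U⁻¹) :
    ∃ ε > 0, ∀ t : ℝ, t ≠ 0 → |t| < ε →
      (eigs (Hfam t) ⟨k - 1, by omega⟩ < eigs (Hfam t) ⟨k, hkn⟩) ∧
      (∀ V ∈ Matrix.unitaryGroup (Fin n) ℂ,
        V⁻¹ * Hfam t * V = Matrix.diagonal (fun i => (eigs (Hfam t) i : ℂ)) →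
        V * LambdaSigma k (Hfam t) * V⁻¹ = H₀) ∧
      ∀ G ∈ SigmaSet n k, G ≠ H₀ → frobNorm (Hfam t - H₀) < frobNorm (Hfam t - G) := by
  obtain ⟨hH₀, heq, hlt⟩ := h₀
  set l := eigs H₀ with hl
  have hlmono : Monotone l := eigs_mono_aux H₀
  set i0 : Fin n := ⟨0, by omega⟩ with hi0
  set ik : Fin n := ⟨k, hkn⟩ with hik
  set c := l i0 with hc
  set δ := l ik - c with hδ
  have hδ0 : 0 < δ := sub_pos.2 (hlt i0 ik (by simp [hi0]; omega) rfl)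
  have hl1 : ∀ i : Fin n, (i : ℕ) < k → l i = c :=
    fun i hi => heq i i0 hi (by simp [hi0]; omega)
  have hl2 : ∀ i : Fin n, ¬ (i : ℕ) < k → c + δ ≤ l i := by
    intro i hi
    have : l ik ≤ l i := hlmono (by rw [Fin.le_def]; simp [hik]; omega)
    linarith
  set S := ∑ i, |D i| with hS
  have hS0 : 0 ≤ S := Finset.sum_nonneg fun i _ => abs_nonneg _
  have hDS : ∀ i, |D i| ≤ S := fun i =>
    Finset.single_le_sum (f := fun i => |D i|) (fun i _ => abs_nonneg _) (Finset.mem_univ i)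
  have hH₀U : H₀ = U * Matrix.diagonal (fun i => (l i : ℂ)) * star U := conj_aux hU hdiag
  refine ⟨δ / (1 + S), by positivity, ?_⟩
  intro t _ht0 ht
  have hM : |t| * S < δ := by
    rw [lt_div_iff₀ (by positivity)] at ht
    nlinarith [abs_nonneg t]
  set M := |t| * S with hMdef
  have hM0 : 0 ≤ M := by positivity
  set d : Fin n → ℝ := fun i => t * D i with hd
  have hd1 : ∀ i, |d i| ≤ M := by
    intro i
    simp only [hd, abs_mul]
    exact mul_le_mul_of_nonneg_left (hDS i) (abs_nonneg _)
  have hd2 : ∀ i : Fin n, ¬ (i : ℕ) < k → d i = 0 := by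
    intro i hi
    simp [hd, hsupp i (not_lt.1 hi)]
  have hds : ∑ i, d i = 0 := by
    simp only [hd, ← Finset.mul_sum, htr, mul_zero]
  set μ : Fin n → ℝ := fun i => l i + d i with hμ
  have hHt : Hfam t = U * Matrix.diagonal (fun i => (μ i : ℂ)) * star U := by
    rw [hHfam, unit_inv_aux hU]
  set H := Hfam t with hH
  have hHerm : H.IsHermitian := by
    rw [hHt, Matrix.star_eq_conjTranspose]
    apply Matrix.isHermitian_mul_mul_conjTranspose
    rw [Matrix.isHermitian_diagonal_iff]
    intro i
    simp [isSelfAdjoint_iff]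
  have hW : ∀ {V : Matrix (Fin n) (Fin n) ℂ}, V ∈ Matrix.unitaryGroup (Fin n) ℂ →
      star U * V ∈ Matrix.unitaryGroup (Fin n) ℂ := fun hV => mul_mem (Unitary.star_mem hU) hV
  -- thresholds
  have hμ1 : ∀ i : Fin n, μ i < c + δ ↔ (i : ℕ) < k := by
    intro i
    by_cases hi : (i : ℕ) < k
    · simp only [hi, iff_true, hμ, hl1 i hi]
      linarith [(abs_le.1 (hd1 i)).2]
    · simp only [hi, iff_false, hμ, hd2 i hi]
      linarith [hl2 i hi]
  set e := eigs H with he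
  have hemono : Monotone e := eigs_mono_aux H
  have hsum : ∀ φ : ℝ → ℝ, ∑ j, φ (e j) = ∑ i, φ (μ i) := by
    obtain ⟨V, hV, hHV⟩ := exists_diag_aux hHerm
    exact sum_fn_aux (fun i j => ‖(star U * V) i j‖ ^ 2) (row_aux (hW hV)) (col_aux (hW hV)) μ e
      (intertwine_aux hU hV μ e (hHt.symm.trans hHV))
  have hcardk : (Finset.univ.filter fun i : Fin n => (i : ℕ) < k).card = k := by
    have : (Finset.univ.filter fun i : Fin n => (i : ℕ) < k) = Finset.Iio ik := by
      ext i; simp [hik, Fin.lt_def]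
    rw [this, Fin.card_Iio]
  have hcard : (Finset.univ.filter fun i => e i < c + δ).card = k := by
    have h1 := hsum (fun x => if x < c + δ then 1 else 0)
    simp only [hμ1] at h1
    rw [Finset.sum_boole, Finset.sum_boole, hcardk] at h1
    exact_mod_cast h1
  have he1 : ∀ i : Fin n, e i < c + δ ↔ (i : ℕ) < k :=
    threshold_aux hkn.le e hemono _ hcard
  have hk0 : (k : ℝ) ≠ 0 := by
    have : k ≠ 0 := by omega
    exact_mod_cast this
  have hbar : lamBar k H = c := by
    unfold lamBar
    rw [div_eq_iff hk0]
    have h1 := hsum (fun x => if x < c + δ then x else 0)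
    simp only [hμ1, he1] at h1
    rw [← he, h1]
    have h2 : ∀ i : Fin n, (if (i : ℕ) < k then μ i else 0)
        = c * (if (i : ℕ) < k then 1 else 0) + d i := by
      intro i
      by_cases hi : (i : ℕ) < k
      · simp [hi, hμ, hl1 i hi]
      · simp [hi, hd2 i hi]
    simp only [h2]
    rw [Finset.sum_add_distrib, hds, ← Finset.mul_sum, Finset.sum_boole, hcardk, add_zero]
  refine ⟨?_, ?_, ?_⟩
  · have h1 : e ⟨k - 1, by omega⟩ < c + δ := (he1 _).2 (by simp; omega)
    have h2 : ¬ e ik < c + δ := fun h => by simpa [hik] using (he1 _).1 h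
    exact h1.trans_le (not_lt.1 h2)
  · intro V hV hVd
    have hHV := conj_aux hV hVd
    have hint := intertwine_aux hU hV μ e (hHt.symm.trans hHV)
    have hLS : LambdaSigma k H
        = Matrix.diagonal (fun i : Fin n => ((if (i : ℕ) < k then c else e i : ℝ) : ℂ)) := by
      unfold LambdaSigma
      rw [hbar]
      congr 1
      funext i
      split_ifs <;> rfl
    rw [hLS, unit_inv_aux hV, hH₀U]
    symm
    refine transport_aux hU hV l (fun i : Fin n => if (i : ℕ) < k then c else e i) ?_
    intro i j
    rcases hint i j with h | h
    · exact Or.inl h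
    · right
      have hij : (i : ℕ) < k ↔ (j : ℕ) < k := by rw [← hμ1, ← he1, h]
      by_cases hi : (i : ℕ) < k
      · simp [hij.1 hi, hl1 i hi]
      · have hj := fun h => hi (hij.2 h)
        simp only [if_neg hj, ← h, hμ, hd2 i hi, add_zero]
  · intro G hG hne
    obtain ⟨hGh, hGeq, hGlt⟩ := hG
    obtain ⟨V, hV, hGV⟩ := exists_diag_aux hGh
    set g := eigs G with hg
    have hgmono : Monotone g := eigs_mono_aux G
    have h1 : fsq (H - H₀) = ∑ i, d i ^ 2 := by
      have : H - H₀ = U * Matrix.diagonal (fun i => (d i : ℂ)) * star U := by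
        rw [hHt, hH₀U, ← Matrix.sub_mul, ← Matrix.mul_sub, Matrix.diagonal_sub]
        congr 3
        funext i
        simp [hμ]
      rw [this, fsq_conj _ _ _ hU hU]
      unfold fsq
      refine Finset.sum_congr rfl fun i _ => ?_
      rw [Finset.sum_eq_single i]
      · simp
      · intro j _ hj
        simp [Matrix.diagonal_apply_ne' _ hj]
      · simp
    have h2 : fsq (H - G) = ∑ i, ∑ j, ‖(star U * V) i j‖ ^ 2 * (l i + d i - g j) ^ 2 := by
      rw [hHt, hGV, fsq_diff U V hU hV]
    have h3 : fsq (H₀ - G) = ∑ i, ∑ j, ‖(star U * V) i j‖ ^ 2 * (l i - g j) ^ 2 := by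
      rw [hH₀U, hGV, fsq_diff U V hU hV]
    have h4 : 0 < fsq (H₀ - G) := by
      refine lt_of_le_of_ne (fsq_nonneg _) fun h => hne ?_
      exact (sub_eq_zero.1 (fsq_eq_zero h.symm)).symm
    change Real.sqrt (fsq (H - H₀)) < Real.sqrt (fsq (H - G))
    apply Real.sqrt_lt_sqrt (fsq_nonneg _)
    rw [h1, h2]
    rw [h3] at h4
    exact key_aux (k := k) (fun i j => ‖(star U * V) i j‖ ^ 2) (fun i j => by positivity)
      (row_aux (hW hV)) (col_aux (hW hV)) l g d (g i0) c δ M hM0 hM hl1 hl2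
      (fun i hi => hGeq i i0 hi (by simp [hi0]; omega))
      (fun i _ => hgmono (by rw [Fin.le_def]; simp [hi0])) hd1 hd2 hds h4


end
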